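/- Let d ≥ 1, let g ∈ C_b^∞(ℝ^d), and let B₁, B₂ be bounded subsets of 𝒢(ℝ^d). Then the family {π₁ *_{g,0} π₂ : π₁ ∈ B₁, π₂ ∈ B₂} is a bounded subset of 𝓗(ℝ^d): for every (s,t) ∈ 𝒯₁ and π₁ ∈ B₁, π₂ ∈ B₂ the function (x,y) ↦ (π₁ *_{g,0} π₂)(s,t,x,y) is infinitely differentiable, and for each pair of multi-indices α, β ∈ ℕ^d there exist constants c₁ ≥ 0 and c₂ > 0, independent of π₁ ∈ B₁ and π₂ ∈ B₂, such that for all (s,t) ∈ 𝒯₁ and x, y ∈ ℝ^d one has both |∂_x^α ∂_y^β (π₁ *_{g,0} π₂)(s,t,x,y)| ≤ c₁ t^{−(|α|+|β|+d)/2} exp(−c₂‖x−y‖²/t) and |∂_x^α(x ↦ (π₁ *_{g,0} π₂)(s,t,x,x+y√t))(x)| ≤ c₁ t^{−d/2} exp(−c₂‖y‖²). -/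

import Mathlib

open MeasureTheory Real

noncomputable section

/-- `ℝ^d` with the Euclidean norm. -/
abbrev Eu (d : ℕ) := EuclideanSpace ℝ (Fin d)

/-- Iterated partial derivative along a list of coordinate directions. -/
noncomputable def pderivs {d : ℕ} : List (Fin d) → (Eu d → ℝ) → Eu d → ℝ
  | [], f => f
  | i :: l, f => pderivs l fun x => fderiv ℝ f x (EuclideanSpace.single i 1)

/-- The list of coordinates (with multiplicities) associated to a multi-index `m : ℕ^d`. -/
def mToList {d : ℕ} (m : Fin d → ℕ) : List (Fin d) :=
  (List.finRange d).flatMap fun i => List.replicate (m i) i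

/-- The partial derivative `∂^m` associated to a multi-index `m : ℕ^d`. -/
noncomputable def pderivM {d : ℕ} (m : Fin d → ℕ) (f : Eu d → ℝ) : Eu d → ℝ :=
  pderivs (mToList m) f

/-- The length `|m| = m₁ + ⋯ + m_d` of a multi-index. -/
def mlen {d : ℕ} (m : Fin d → ℕ) : ℕ := ∑ i, m i

/-- Mixed partial derivative `∂_x^α ∂_y^β f(x,y)` of a function of two `ℝ^d` variables. -/
noncomputable def D2 {d : ℕ} (α β : Fin d → ℕ) (f : Eu d → Eu d → ℝ) (x y : Eu d) : ℝ :=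
  pderivM α (fun x' => pderivM β (f x') y) x

/-- The space convolution `(π₁ *_{g,0} π₂)(s,t,x,y) = ∫ g(z) π₁(s,x,z) π₂(t-s,z,y) dz`. -/
noncomputable def convG0 {d : ℕ} (g : Eu d → ℝ)
    (P₁ P₂ : ℝ → Eu d → Eu d → ℝ) (s t : ℝ) (x y : Eu d) : ℝ :=
  ∫ z : Eu d, g z * (P₁ s x z * P₂ (t - s) z y)

/-!
The difficulty is that differentiating `∫ g(z) π₁(s, x, z) π₂(t - s, z, y) dz` naively in `x` and
`y` costs negative powers of both `s` and `t - s`, while only powers of `t` are allowed. After the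
substitution `z = y + w` the second kernel becomes `π₂(t - s, y + w, y)`, whose derivatives in `y`
are diagonal and therefore free, so that all singular derivatives fall on `π₁` and cost at most
`s ^ (-n / 2)`. This is enough if `s ≥ t / 2`; otherwise `t - s ≥ t / 2`, and exchanging the roles
of `x` and `y` moves the derivatives to `π₂`. The diagonal derivatives of the convolution itself are
free for the same reason, as translating `x`, `y` and `z` together only produces diagonal
derivatives of the kernels. In all cases the Gaussian factors at times `s` and `t - s` integrate to
the one at time `t`, by the semigroup property of the heat kernel.
-/

open scoped ContDiff

section IntegralDepSmooth

variable {E : Type*} [NormedAddCommGroup E] [NormedSpace ℝ E]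
  {F : Type*} [NormedAddCommGroup F] [NormedSpace ℝ F]

section Measure

variable {W : Type*} [MeasurableSpace W] {μ : Measure W} {f : E → W → F} {n : ℕ∞}
  {bound : ℕ → W → ℝ}

theorem curryLeft_integral {k : ℕ} (A : W → E [×k + 1]→L[ℝ] F) :
    (∫ w, A w ∂μ).curryLeft = ∫ w, (A w).curryLeft ∂μ :=
  (ContinuousLinearEquiv.integral_comp_comm (𝕜 := ℝ) (E := E [×k + 1]→L[ℝ] F)
    (F := E →L[ℝ] E [×k]→L[ℝ] F) (continuousMultilinearCurryLeftEquiv ℝ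
      (fun _ : Fin (k + 1) => E) F).toContinuousLinearEquiv A).symm

theorem hasFTaylorSeriesUpTo_integral_of_dominated
    (hf : ∀ w, ContDiff ℝ n fun x => f x w)
    (hmeas : ∀ k : ℕ, k ≤ n → ∀ x,
      AEStronglyMeasurable (fun w => iteratedFDeriv ℝ k (fun x => f x w) x) μ)
    (hint : ∀ k : ℕ, k ≤ n → Integrable (bound k) μ)
    (hbound : ∀ k : ℕ, k ≤ n → ∀ x w, ‖iteratedFDeriv ℝ k (fun x => f x w) x‖ ≤ bound k w) :
    HasFTaylorSeriesUpTo n (fun x => ∫ w, f x w ∂μ)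
      fun x k => ∫ w, iteratedFDeriv ℝ k (fun x => f x w) x ∂μ where
  zero_eq x :=
    ((continuousMultilinearCurryFin0 ℝ E F).toContinuousLinearEquiv.integral_comp_comm
      fun w => iteratedFDeriv ℝ 0 (fun x => f x w) x).symm
  fderiv k hk x := by
    have hk₀ : k < n := by exact_mod_cast hk
    have hk₁ : ((k + 1 : ℕ) : ℕ∞) ≤ n := Order.add_one_le_of_lt hk₀
    have hderiv (w : W) (x : E) : HasFDerivAt (iteratedFDeriv ℝ k fun x => f x w)
        (iteratedFDeriv ℝ (k + 1) (fun x => f x w) x).curryLeft x :=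
      (hf w).ftaylorSeries.fderiv k hk x
    change HasFDerivAt _ (∫ w, iteratedFDeriv ℝ (k + 1) (fun x => f x w) x ∂μ).curryLeft x
    rw [curryLeft_integral]
    refine hasFDerivAt_integral_of_dominated_of_fderiv_le (bound := bound (k + 1)) Filter.univ_mem
      (.of_forall (hmeas k hk₀.le)) ?_ ?_ (.of_forall fun w x _ => ?_) (hint _ hk₁)
      (.of_forall fun w x _ => hderiv w x)
    · exact (hint k hk₀.le).mono' (hmeas k hk₀.le x) (.of_forall (hbound k hk₀.le x))
    · exact (continuousMultilinearCurryLeftEquiv ℝ (fun _ : Fin (k + 1) => E) F).continuous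
        |>.comp_aestronglyMeasurable (hmeas (k + 1) hk₁ x)
    · rw [ContinuousMultilinearMap.curryLeft_norm]
      exact hbound (k + 1) hk₁ x w
  cont k hk := by
    have hk' : k ≤ n := by exact_mod_cast hk
    exact continuous_of_dominated (hmeas k hk') (fun x => .of_forall (hbound k hk' x)) (hint k hk')
      (.of_forall fun w => (hf w).continuous_iteratedFDeriv (by exact_mod_cast hk'))

end Measure

variable {W : Type*} [NormedAddCommGroup W] [NormedSpace ℝ W] {f : E → W → F} {n : ℕ∞}

theorem continuous_iteratedFDeriv_left (hf : ContDiff ℝ n (Function.uncurry f)) {k : ℕ}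
    (hk : k ≤ n) :
    Continuous fun q : E × W => iteratedFDeriv ℝ k (fun x => f x q.2) q.1 := by
  have hslice (x : E) (w : W) : iteratedFDeriv ℝ k (fun x => f x w) x =
      (iteratedFDeriv ℝ k (Function.uncurry f) (x, w)).compContinuousLinearMap
        fun _ => ContinuousLinearMap.inl ℝ E W := by
    have hshift : ContDiff ℝ n fun q : E × W => Function.uncurry f (q + (0, w)) :=
      hf.comp (contDiff_id.add contDiff_const)
    have hcomp := (ContinuousLinearMap.inl ℝ E W).iteratedFDeriv_comp_right hshift x
      (i := k) (by exact_mod_cast hk)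
    rw [iteratedFDeriv_comp_add_right] at hcomp
    simpa [Function.comp_def, Function.uncurry] using hcomp
  simp only [hslice]
  exact (ContinuousMultilinearMap.compContinuousLinearMapL fun _ =>
    ContinuousLinearMap.inl ℝ E W).continuous.comp
      (hf.continuous_iteratedFDeriv (by exact_mod_cast hk))

variable [MeasurableSpace W] [BorelSpace W] [SecondCountableTopology W] {μ : Measure W}
  {bound : ℕ → W → ℝ}

theorem hasFTaylorSeriesUpTo_integral_of_contDiff (hf : ContDiff ℝ n (Function.uncurry f))
    (hint : ∀ k : ℕ, k ≤ n → Integrable (bound k) μ)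
    (hbound : ∀ k : ℕ, k ≤ n → ∀ x w, ‖iteratedFDeriv ℝ k (fun x => f x w) x‖ ≤ bound k w) :
    HasFTaylorSeriesUpTo n (fun x => ∫ w, f x w ∂μ)
      fun x k => ∫ w, iteratedFDeriv ℝ k (fun x => f x w) x ∂μ :=
  hasFTaylorSeriesUpTo_integral_of_dominated
    (fun _w => hf.comp (contDiff_id.prodMk contDiff_const))
    (fun _k hk x => ((continuous_iteratedFDeriv_left hf hk).comp
      (Continuous.prodMk_right x)).aestronglyMeasurable) hint hbound

end IntegralDepSmooth

section IteratedDirDeriv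

variable {E : Type*} [NormedAddCommGroup E] [NormedSpace ℝ E]
  {F : Type*} [NormedAddCommGroup F] [NormedSpace ℝ F]

/-- The iterated directional derivative of `f` along the vectors of a list, the head of the list
being the direction of the first differentiation. -/
def iteratedDirDeriv : List E → (E → F) → E → F
  | [], f => f
  | v :: L, f => iteratedDirDeriv L fun x => fderiv ℝ f x v

theorem contDiff_fderiv_apply_const {f : E → F} {n : ℕ} (hf : ContDiff ℝ (n + 1 : ℕ) f) (v : E) :
    ContDiff ℝ n fun x => fderiv ℝ f x v :=
  (hf.fderiv_right (by norm_cast)).clm_apply contDiff_const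

theorem contDiff_iteratedDirDeriv {n : ℕ} (L : List E) {f : E → F}
    (hf : ContDiff ℝ (n + L.length : ℕ) f) : ContDiff ℝ n (iteratedDirDeriv L f) := by
  induction L generalizing f with
  | nil => exact hf
  | cons v L ih => exact ih (contDiff_fderiv_apply_const hf v)

theorem iteratedDirDeriv_append (L L' : List E) (f : E → F) :
    iteratedDirDeriv (L ++ L') f = iteratedDirDeriv L' (iteratedDirDeriv L f) := by
  induction L generalizing f with
  | nil => rfl
  | cons v _ ih => exact ih _

theorem fderiv_fderiv_apply_comm {f : E → F} (hf : ContDiff ℝ 2 f) (v w : E) :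
    (fun x => fderiv ℝ (fun x => fderiv ℝ f x v) x w) =
      fun x => fderiv ℝ (fun x => fderiv ℝ f x w) x v := by
  ext x
  have hdiff : DifferentiableAt ℝ (fderiv ℝ f) x :=
    (hf.fderiv_right (m := 1) (by norm_num)).differentiable (by simp) x
  have hsymm : IsSymmSndFDerivAt ℝ f x := hf.contDiffAt.isSymmSndFDerivAt (by simp)
  rw [fderiv_clm_apply hdiff (differentiableAt_const _),
    fderiv_clm_apply hdiff (differentiableAt_const _)]
  simpa using hsymm w v

theorem iteratedDirDeriv_perm {L L' : List E} (h : L.Perm L') {f : E → F}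
    (hf : ContDiff ℝ L.length f) : iteratedDirDeriv L f = iteratedDirDeriv L' f := by
  induction h generalizing f with
  | nil => rfl
  | cons v _ ih => exact ih (contDiff_fderiv_apply_const hf v)
  | swap v w L =>
    have hf₂ : ContDiff ℝ 2 f := hf.of_le (by
      exact_mod_cast (by simp : 2 ≤ (w :: v :: L).length))
    exact congrArg (iteratedDirDeriv L) (fderiv_fderiv_apply_comm hf₂ w v)
  | trans h₁ _ ih₁ ih₂ => rw [ih₁ hf, ih₂ (h₁.length_eq ▸ hf)]

theorem iteratedDirDeriv_comp_affine {E' : Type*} [NormedAddCommGroup E'] [NormedSpace ℝ E']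
    (A : E' →L[ℝ] E) (c : E) (L : List E') {f : E → F} (hf : ContDiff ℝ L.length f) (x : E') :
    iteratedDirDeriv L (fun x => f (A x + c)) x = iteratedDirDeriv (L.map A) f (A x + c) := by
  induction L generalizing f with
  | nil => rfl
  | cons v L ih =>
    have hchain : (fun x => fderiv ℝ (fun x => f (A x + c)) x v) =
        fun x => fderiv ℝ f (A x + c) (A v) := by
      ext x
      have hfx : HasFDerivAt f (fderiv ℝ f (A x + c)) (A x + c) :=
        (hf.differentiable (by simp) _).hasFDerivAt
      exact congrArg (· v) (hfx.comp x (A.hasFDerivAt.add_const c)).fderiv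
    rw [iteratedDirDeriv, hchain]
    exact ih (contDiff_fderiv_apply_const hf (A v))

theorem norm_iteratedDirDeriv_le {L : List E} (hL : ∀ v ∈ L, ‖v‖ ≤ 1) {f : E → F}
    (hf : ContDiff ℝ L.length f) (x : E) :
    ‖iteratedDirDeriv L f x‖ ≤ ‖iteratedFDeriv ℝ L.length f x‖ := by
  induction L generalizing f with
  | nil => simp [iteratedDirDeriv]
  | cons v L ih =>
    rw [List.forall_mem_cons] at hL
    calc ‖iteratedDirDeriv L (fun x => fderiv ℝ f x v) x‖
        ≤ ‖iteratedFDeriv ℝ L.length (fun x => fderiv ℝ f x v) x‖ :=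
          ih hL.2 (contDiff_fderiv_apply_const hf v)
      _ ≤ ‖v‖ * ‖iteratedFDeriv ℝ L.length (fderiv ℝ f) x‖ :=
          norm_iteratedFDeriv_clm_apply_const
            (hf.fderiv_right (m := L.length) (by norm_cast)).contDiffAt le_rfl
      _ ≤ ‖iteratedFDeriv ℝ (L.length + 1) f x‖ := by
          rw [norm_iteratedFDeriv_fderiv]
          exact mul_le_of_le_one_left (norm_nonneg _) hL.1

theorem iteratedFDeriv_apply_eq_iteratedDirDeriv {n : ℕ} {f : E → F} (hf : ContDiff ℝ n f)
    (v : Fin n → E) (x : E) :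
    iteratedFDeriv ℝ n f x v = iteratedDirDeriv (List.ofFn v).reverse f x := by
  induction n generalizing f with
  | zero => simp [iteratedDirDeriv]
  | succ n ih =>
    rw [iteratedFDeriv_succ_apply_right, ← iteratedFDeriv_clm_apply_const_apply
      (hf.fderiv_right (m := n) (by norm_cast)) le_rfl, ih (contDiff_fderiv_apply_const hf _),
      List.ofFn_succ', List.concat_eq_append, List.reverse_append]
    rfl

theorem norm_continuousMultilinearMap_le_of_basis {ι : Type*} [Fintype ι] (b : Module.Basis ι ℝ E)
    (hb : ∀ i v, |b.repr v i| ≤ ‖v‖) {n : ℕ} (A : E [×n]→L[ℝ] F) {M : ℝ}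
    (hA : ∀ r : Fin n → ι, ‖A (b ∘ r)‖ ≤ M) : ‖A‖ ≤ Fintype.card ι ^ n * M := by
  classical
  have hnonneg : 0 ≤ Fintype.card ι ^ n * M :=
    calc (0 : ℝ) ≤ ∑ r : Fin n → ι, ‖A (b ∘ r)‖ := by positivity
      _ ≤ ∑ _r : Fin n → ι, M := Finset.sum_le_sum fun r _ => hA r
      _ = Fintype.card ι ^ n * M := by simp
  refine A.opNorm_le_bound hnonneg fun m => ?_
  have hexpand : A m = ∑ r : Fin n → ι, (∏ i, b.repr (m i) (r i)) • A (b ∘ r) := by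
    conv_lhs => rw [show m = fun i => ∑ j, b.repr (m i) j • b j from
      funext fun i => (b.sum_repr (m i)).symm]
    rw [A.map_sum]
    exact Finset.sum_congr rfl fun r _ => A.map_smul_univ _ _
  calc ‖A m‖ ≤ ∑ _r : Fin n → ι, (∏ i, ‖m i‖) * M := by
        rw [hexpand]
        refine norm_sum_le_of_le _ fun r _ => ?_
        rw [norm_smul, norm_prod]
        gcongr with i
        · exact hb _ _
        · exact hA r
    _ = Fintype.card ι ^ n * M * ∏ i, ‖m i‖ := by simp; ring

end IteratedDirDeriv

section DerivBound

variable {E : Type*} [NormedAddCommGroup E] [NormedSpace ℝ E]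
  {F : Type*} [NormedAddCommGroup F] [NormedSpace ℝ F]

/-- All derivatives of `f` at `x` of order at most `n`, including `f x` itself, have norm at most
`C`. -/
def DerivBound (n : ℕ) (C : ℝ) (f : E → F) (x : E) : Prop :=
  ∀ k ≤ n, ‖iteratedFDeriv ℝ k f x‖ ≤ C

namespace DerivBound

variable {n : ℕ} {C : ℝ} {f : E → F} {x : E}

theorem nonneg (h : DerivBound n C f x) : 0 ≤ C :=
  (norm_nonneg _).trans (h 0 n.zero_le)

theorem mono {C' : ℝ} (h : DerivBound n C f x) (hC : C ≤ C') : DerivBound n C' f x :=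
  fun k hk => (h k hk).trans hC

theorem mul {A B : ℝ} {f g : E → ℝ} (hf : ContDiff ℝ n f) (hg : ContDiff ℝ n g)
    (hA : DerivBound n A f x) (hB : DerivBound n B g x) :
    DerivBound n (2 ^ n * (A * B)) (fun x => f x * g x) x := by
  intro k hk
  have hAB : 0 ≤ A * B := mul_nonneg hA.nonneg hB.nonneg
  calc ‖iteratedFDeriv ℝ k (fun x => f x * g x) x‖
      ≤ ∑ i ∈ Finset.range (k + 1), (k.choose i : ℝ) * ‖iteratedFDeriv ℝ i f x‖ *
          ‖iteratedFDeriv ℝ (k - i) g x‖ :=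
        norm_iteratedFDeriv_mul_le hf hg x (by exact_mod_cast hk)
    _ ≤ ∑ i ∈ Finset.range (k + 1), (k.choose i : ℝ) * (A * B) := by
        refine Finset.sum_le_sum fun i hi => ?_
        rw [mul_assoc]
        gcongr
        · exact hA.nonneg
        · exact hA i ((Finset.mem_range_succ_iff.1 hi).trans hk)
        · exact hB (k - i) ((k.sub_le i).trans hk)
    _ = 2 ^ k * (A * B) := by
        rw [← Finset.sum_mul]
        exact_mod_cast congrArg (fun m : ℕ => (m : ℝ) * (A * B)) (Nat.sum_range_choose k)
    _ ≤ 2 ^ n * (A * B) := by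
        gcongr
        exact one_le_two

theorem comp_affine {E' : Type*} [NormedAddCommGroup E'] [NormedSpace ℝ E'] {A : E' →L[ℝ] E}
    (hA : ‖A‖ ≤ 1) {c : E} {x : E'} (hf : ContDiff ℝ n f) (h : DerivBound n C f (A x + c)) :
    DerivBound n C (fun x => f (A x + c)) x := by
  intro k hk
  have hshift : ContDiff ℝ n fun y => f (y + c) := hf.comp (contDiff_id.add contDiff_const)
  have hchain := A.iteratedFDeriv_comp_right hshift x (i := k) (by exact_mod_cast hk)
  rw [iteratedFDeriv_comp_add_right] at hchain
  calc ‖iteratedFDeriv ℝ k (fun x => f (A x + c)) x‖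
      = ‖(iteratedFDeriv ℝ k f (A x + c)).compContinuousLinearMap fun _ => A‖ :=
        congrArg norm hchain
    _ ≤ ‖iteratedFDeriv ℝ k f (A x + c)‖ * ∏ _i : Fin k, ‖A‖ :=
        ContinuousMultilinearMap.norm_compContinuousLinearMap_le _ _
    _ ≤ ‖iteratedFDeriv ℝ k f (A x + c)‖ :=
        mul_le_of_le_one_right (norm_nonneg _)
          (Finset.prod_le_one (fun _ _ => norm_nonneg A) fun _ _ => hA)
    _ ≤ C := h k hk

theorem norm_iteratedDirDeriv_le {L : List E} (h : DerivBound n C f x) (hn : L.length ≤ n)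
    (hL : ∀ v ∈ L, ‖v‖ ≤ 1) (hf : ContDiff ℝ n f) : ‖iteratedDirDeriv L f x‖ ≤ C :=
  (_root_.norm_iteratedDirDeriv_le hL (hf.of_le (by exact_mod_cast hn)) x).trans (h _ hn)

theorem of_basis {ι : Type*} [Fintype ι] (b : Module.Basis ι ℝ E)
    (hb : ∀ i v, |b.repr v i| ≤ ‖v‖) (hf : ContDiff ℝ n f)
    (hC : ∀ l : List ι, l.length ≤ n → ‖iteratedDirDeriv (l.map b) f x‖ ≤ C) :
    DerivBound n ((1 + Fintype.card ι) ^ n * C) f x := by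
  intro k hk
  have hnonneg : 0 ≤ C := (norm_nonneg _).trans (hC [] n.zero_le)
  have hbasis (r : Fin k → ι) : ‖iteratedFDeriv ℝ k f x (b ∘ r)‖ ≤ C := by
    rw [iteratedFDeriv_apply_eq_iteratedDirDeriv (hf.of_le (by exact_mod_cast hk)),
      ← List.map_ofFn, ← List.map_reverse]
    exact hC _ (by simpa using hk)
  calc ‖iteratedFDeriv ℝ k f x‖
      ≤ Fintype.card ι ^ k * C := norm_continuousMultilinearMap_le_of_basis b hb _ hbasis
    _ ≤ (1 + Fintype.card ι) ^ k * C := by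
        gcongr
        exact le_add_of_nonneg_left zero_le_one
    _ ≤ (1 + Fintype.card ι) ^ n * C := by
        gcongr
        exact le_add_of_nonneg_right (Nat.cast_nonneg _)

end DerivBound

end DerivBound

section GaussianProfile

section NormedSpace

variable {V : Type*} [NormedAddCommGroup V] [NormedSpace ℝ V]

/-- The Gaussian profile `t ^ (-d / 2) * exp (-c * ‖v‖ ^ 2 / t)` on a space of dimension `d`. It is
the heat kernel at time `t` up to a normalizing factor that depends on `c` but not on `t`. -/
def gaussianProfile (c t : ℝ) (v : V) : ℝ :=
  t ^ (-(Module.finrank ℝ V : ℝ) / 2) * exp (-c * ‖v‖ ^ 2 / t)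

variable {c c' t : ℝ}

theorem gaussianProfile_nonneg (ht : 0 ≤ t) (v : V) : 0 ≤ gaussianProfile c t v := by
  unfold gaussianProfile
  positivity

theorem gaussianProfile_neg (v : V) : gaussianProfile c t (-v) = gaussianProfile c t v := by
  simp only [gaussianProfile, norm_neg]

theorem gaussianProfile_antitone_left (ht : 0 ≤ t) (hc : c' ≤ c) (v : V) :
    gaussianProfile c t v ≤ gaussianProfile c' t v := by
  unfold gaussianProfile
  gcongr

theorem gaussianProfile_le_rpow (hc : 0 ≤ c) (ht : 0 ≤ t) (v : V) :
    gaussianProfile c t v ≤ t ^ (-(Module.finrank ℝ V : ℝ) / 2) := by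
  refine mul_le_of_le_one_right (by positivity) (exp_le_one_iff.2 ?_)
  rw [neg_mul, neg_div]
  exact neg_nonpos.2 (by positivity)

theorem gaussianProfile_sqrt_smul (ht : 0 < t) (v : V) :
    gaussianProfile c t (√t • v) =
      t ^ (-(Module.finrank ℝ V : ℝ) / 2) * exp (-c * ‖v‖ ^ 2) := by
  rw [gaussianProfile, norm_smul, mul_pow, norm_of_nonneg (sqrt_nonneg t), sq_sqrt ht.le]
  congr 2
  field_simp

end NormedSpace

variable {V : Type*} [NormedAddCommGroup V] [InnerProductSpace ℝ V] {a b c t : ℝ}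

theorem exp_neg_sq_norm_sub_mul_exp_neg_sq_norm (ha : 0 < a) (hb : 0 < b) (u w : V) :
    exp (-c * ‖u - w‖ ^ 2 / a) * exp (-c * ‖w‖ ^ 2 / b) =
      exp (-c * ‖u‖ ^ 2 / (a + b)) *
        exp (-(c * (a + b) / (a * b)) * ‖w - (b / (a + b)) • u‖ ^ 2) := by
  rw [← exp_add, ← exp_add, norm_sub_sq_real, norm_sub_sq_real, inner_smul_right, norm_smul,
    real_inner_comm, mul_pow, Real.norm_eq_abs, sq_abs]
  congr 1
  field_simp
  ring

variable [FiniteDimensional ℝ V] [MeasurableSpace V] [BorelSpace V]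

theorem integrable_exp_neg_mul_sq_norm (hc : 0 < c) :
    Integrable fun v : V => exp (-c * ‖v‖ ^ 2) := by
  refine .of_integral_ne_zero ?_
  rw [GaussianFourier.integral_rexp_neg_mul_sq_norm hc]
  positivity

theorem integrable_gaussianProfile (hc : 0 < c) (ht : 0 < t) :
    Integrable (gaussianProfile c t : V → ℝ) := by
  refine Integrable.const_mul ?_ _
  simpa only [neg_mul, mul_div_right_comm, neg_div] using
    integrable_exp_neg_mul_sq_norm (V := V) (div_pos hc ht)

theorem integral_gaussianProfile_mul_gaussianProfile (hc : 0 < c) (ha : 0 < a) (hb : 0 < b)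
    (u : V) :
    ∫ w, gaussianProfile c a (u - w) * gaussianProfile c b w =
      (π / c) ^ ((Module.finrank ℝ V : ℝ) / 2) * gaussianProfile c (a + b) u := by
  set k := c * (a + b) / (a * b) with hk
  have hk₀ : 0 < k := by positivity
  set e := (Module.finrank ℝ V : ℝ) / 2
  have hcomplete (w : V) : gaussianProfile c a (u - w) * gaussianProfile c b w =
      a ^ (-e) * b ^ (-e) * exp (-c * ‖u‖ ^ 2 / (a + b)) *
        exp (-k * ‖w - (b / (a + b)) • u‖ ^ 2) := by
    rw [mul_assoc _ (exp _), ← exp_neg_sq_norm_sub_mul_exp_neg_sq_norm ha hb, gaussianProfile,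
      gaussianProfile, neg_div]
    ring
  have hconst : a ^ (-e) * b ^ (-e) * (π / k) ^ e = (π / c) ^ e * (a + b) ^ (-e) := by
    rw [rpow_neg_eq_inv_rpow, rpow_neg_eq_inv_rpow, rpow_neg_eq_inv_rpow,
      ← mul_rpow (by positivity) (by positivity), ← mul_rpow (by positivity) (by positivity),
      ← mul_rpow (by positivity) (by positivity)]
    congr 1
    rw [hk]
    field_simp
  calc ∫ w, gaussianProfile c a (u - w) * gaussianProfile c b w
      = a ^ (-e) * b ^ (-e) * exp (-c * ‖u‖ ^ 2 / (a + b)) * (π / k) ^ e := by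
        simp_rw [hcomplete]
        rw [integral_const_mul, integral_sub_right_eq_self (fun w : V => exp (-k * ‖w‖ ^ 2)),
          GaussianFourier.integral_rexp_neg_mul_sq_norm hk₀]
    _ = (π / c) ^ e * gaussianProfile c (a + b) u := by
        rw [gaussianProfile, neg_div, ← mul_assoc, ← hconst]
        ring

end GaussianProfile

section GaussianDominated

variable {E : Type*} [NormedAddCommGroup E] [NormedSpace ℝ E]
  {F : Type*} [NormedAddCommGroup F] [NormedSpace ℝ F]

/-- The derivatives in `x` of the integrand `f x w`, up to order `n`, are dominated by the integrand
of the convolution at `U x` of two Gaussian profiles, at times `a` and `b`. -/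
def GaussianDominated {V : Type*} [NormedAddCommGroup V] [NormedSpace ℝ V] (n : ℕ)
    (C c a b : ℝ) (U : E → V) (f : E → V → F) : Prop :=
  ∀ x w, DerivBound n (C * (gaussianProfile c a (U x - w) * gaussianProfile c b w))
    (fun x => f x w) x

namespace GaussianDominated

variable {V : Type*} [NormedAddCommGroup V] [InnerProductSpace ℝ V] [FiniteDimensional ℝ V]
  [MeasurableSpace V] [BorelSpace V] {n : ℕ} {C c a b : ℝ} {U : E → V} {f : E → V → F}

theorem hasFTaylorSeriesUpTo_integral (h : GaussianDominated n C c a b U f)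
    (hf : ContDiff ℝ n (Function.uncurry f)) (hc : 0 < c) (ha : 0 < a) (hb : 0 < b) :
    HasFTaylorSeriesUpTo n (fun x => ∫ w, f x w)
      fun x k => ∫ w, iteratedFDeriv ℝ k (fun x => f x w) x := by
  let e : ℝ := -(Module.finrank ℝ V : ℝ) / 2
  refine hasFTaylorSeriesUpTo_integral_of_contDiff (n := n) hf
    (bound := fun _k w => |C| * (a ^ e * gaussianProfile c b w))
    (fun _k _hk => ((integrable_gaussianProfile hc hb).const_mul _).const_mul _)
    fun k hk x w => (h x w k (by exact_mod_cast hk)).trans ?_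
  have ha₀ := gaussianProfile_nonneg (c := c) ha.le (U x - w)
  have hb₀ := gaussianProfile_nonneg (c := c) hb.le w
  gcongr
  · exact le_abs_self C
  · exact gaussianProfile_le_rpow hc.le ha.le _

theorem contDiff_integral (h : GaussianDominated n C c a b U f)
    (hf : ContDiff ℝ n (Function.uncurry f)) (hc : 0 < c) (ha : 0 < a) (hb : 0 < b) :
    ContDiff ℝ n fun x => ∫ w, f x w :=
  (h.hasFTaylorSeriesUpTo_integral hf hc ha hb).contDiff

theorem derivBound_integral (h : GaussianDominated n C c a b U f)
    (hf : ContDiff ℝ n (Function.uncurry f)) (hc : 0 < c) (ha : 0 < a) (hb : 0 < b) (x : E) :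
    DerivBound n (C * ((π / c) ^ ((Module.finrank ℝ V : ℝ) / 2) * gaussianProfile c (a + b) (U x)))
      (fun x => ∫ w, f x w) x := by
  intro k hk
  have hint : Integrable fun w => gaussianProfile c a (U x - w) * gaussianProfile c b w := by
    refine .of_integral_ne_zero ?_
    rw [integral_gaussianProfile_mul_gaussianProfile hc ha hb]
    unfold gaussianProfile
    positivity
  rw [← (h.hasFTaylorSeriesUpTo_integral hf hc ha hb).eq_iteratedFDeriv (by exact_mod_cast hk) x,
    ← integral_gaussianProfile_mul_gaussianProfile hc ha hb, ← integral_const_mul]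
  exact norm_integral_le_of_norm_le (hint.const_mul C) (.of_forall fun w => h x w k hk)

end GaussianDominated

end GaussianDominated

namespace DerivBound

variable {E : Type*} [NormedAddCommGroup E] [NormedSpace ℝ E]
  {E' : Type*} [NormedAddCommGroup E'] [NormedSpace ℝ E']
  {F : Type*} [NormedAddCommGroup F] [NormedSpace ℝ F]

theorem uncurry_swap {n : ℕ} {C : ℝ} {Φ : E → E' → F} {x : E} {y : E'}
    (h : DerivBound n C (Function.uncurry Φ) (x, y)) :
    DerivBound n C (Function.uncurry fun y x => Φ x y) (y, x) := fun k hk =>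
  ((LinearIsometryEquiv.prodComm ℝ E' E).norm_iteratedFDeriv_comp_right (Function.uncurry Φ)
    (y, x) k).trans_le (h k hk)

end DerivBound

section GaussianKernelBound

variable {V : Type*} [NormedAddCommGroup V] [NormedSpace ℝ V]
  {n : ℕ} {C C' c c' t : ℝ} {Φ Ψ : V → V → ℝ}

/-- The estimates satisfied by a kernel `Φ = π(t, ·, ·)` in a bounded subset of `𝒢(ℝ^d)` or of
`𝓗(ℝ^d)`, up to a fixed order `n` of differentiation: arbitrary derivatives may cost a factor
`t ^ (-n / 2)`, whereas derivatives along the diagonal direction cost nothing. The latter are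
expressed with translations by arbitrary `u`, `v` instead of the paper's `0`, `√t • y`. -/
structure GaussianKernelBound (n : ℕ) (C c t : ℝ) (Φ : V → V → ℝ) : Prop where
  contDiff : ContDiff ℝ n (Function.uncurry Φ)
  joint : ∀ x y, DerivBound n (C * t ^ (-(n : ℝ) / 2) * gaussianProfile c t (x - y))
    (Function.uncurry Φ) (x, y)
  diag : ∀ u v x, DerivBound n (C * gaussianProfile c t (u - v)) (fun x => Φ (x + u) (x + v)) x

namespace GaussianKernelBound

theorem contDiff_diag (h : GaussianKernelBound n C c t Φ) (u v : V) :
    ContDiff ℝ n fun x => Φ (x + u) (x + v) :=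
  h.contDiff.comp ((contDiff_id.add contDiff_const).prodMk (contDiff_id.add contDiff_const))

theorem nonneg (h : GaussianKernelBound n C c t Φ) (ht : 0 < t) : 0 ≤ C := by
  have hpos : 0 < gaussianProfile c t (0 - 0 : V) := by
    unfold gaussianProfile
    positivity
  exact nonneg_of_mul_nonneg_left (h.diag 0 0 0).nonneg hpos

theorem mono (h : GaussianKernelBound n C c t Φ) (ht : 0 < t) (hC : C ≤ C') (hc : c' ≤ c) :
    GaussianKernelBound n C' c' t Φ where
  contDiff := h.contDiff
  joint x y := (h.joint x y).mono <| by
    have := gaussianProfile_nonneg (c := c) ht.le (x - y)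
    have := (h.nonneg ht).trans hC
    gcongr
    exact gaussianProfile_antitone_left ht.le hc _
  diag u v x := (h.diag u v x).mono <| by
    have := gaussianProfile_nonneg (c := c) ht.le (u - v)
    have := (h.nonneg ht).trans hC
    gcongr
    exact gaussianProfile_antitone_left ht.le hc _

theorem swap (h : GaussianKernelBound n C c t Φ) :
    GaussianKernelBound n C c t fun x y => Φ y x where
  contDiff := h.contDiff.comp (contDiff_snd.prodMk contDiff_fst)
  joint x y := by
    rw [← neg_sub, gaussianProfile_neg]
    exact (h.joint y x).uncurry_swap
  diag u v x := by
    rw [← neg_sub, gaussianProfile_neg]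
    exact h.diag v u x

end GaussianKernelBound

theorem GaussianDominated.of_mul_mul {E : Type*} [NormedAddCommGroup E] [NormedSpace ℝ E]
    {G C₁ C₂ a b : ℝ} {U : E → V} {f₀ f₁ f₂ : E → V → ℝ}
    (hf₀ : ∀ w, ContDiff ℝ n fun x => f₀ x w) (hf₁ : ∀ w, ContDiff ℝ n fun x => f₁ x w)
    (hf₂ : ∀ w, ContDiff ℝ n fun x => f₂ x w)
    (h₀ : ∀ x w, DerivBound n G (fun x => f₀ x w) x)
    (h₁ : ∀ x w, DerivBound n (C₁ * gaussianProfile c a (U x - w)) (fun x => f₁ x w) x)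
    (h₂ : ∀ x w, DerivBound n (C₂ * gaussianProfile c b w) (fun x => f₂ x w) x) :
    GaussianDominated n (4 ^ n * (G * (C₁ * C₂))) c a b U fun x w =>
      f₀ x w * (f₁ x w * f₂ x w) := fun x w =>
  ((h₀ x w).mul (hf₀ w) ((hf₁ w).mul (hf₂ w)) ((h₁ x w).mul (hf₁ w) (hf₂ w) (h₂ x w))).mono <|
    le_of_eq <| by
      rw [show (4 : ℝ) = 2 * 2 by norm_num, mul_pow]
      ring

/-- The integrand `g(z) Φ(x, z) Ψ(z, y)` of the space convolution after the substitution
`z = y + w`, as a function of `p = (x, y)` and `w`. -/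
def shiftedIntegrand (g : V → ℝ) (Φ Ψ : V → V → ℝ) (p : V × V) (w : V) : ℝ :=
  g (p.2 + w) * (Φ p.1 (p.2 + w) * Ψ (p.2 + w) p.2)

variable {g : V → ℝ} {G a b : ℝ}

theorem contDiff_shiftedIntegrand (hg : ContDiff ℝ n g) (hΦ : ContDiff ℝ n (Function.uncurry Φ))
    (hΨ : ContDiff ℝ n (Function.uncurry Ψ)) :
    ContDiff ℝ n (Function.uncurry (shiftedIntegrand g Φ Ψ)) := by
  have hx : ContDiff ℝ n fun q : (V × V) × V => q.1.1 := contDiff_fst.comp contDiff_fst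
  have hy : ContDiff ℝ n fun q : (V × V) × V => q.1.2 := contDiff_snd.comp contDiff_fst
  have hz : ContDiff ℝ n fun q : (V × V) × V => q.1.2 + q.2 := hy.add contDiff_snd
  exact (hg.comp hz).mul ((hΦ.comp (hx.prodMk hz)).mul (hΨ.comp (hz.prodMk hy)))

theorem gaussianDominated_shiftedIntegrand (hg : ContDiff ℝ n g) (hG : ∀ x, DerivBound n G g x)
    (hΦ : GaussianKernelBound n C c a Φ) (hΨ : GaussianKernelBound n C c b Ψ) :
    GaussianDominated n (4 ^ n * (G * (C * a ^ (-(n : ℝ) / 2) * C))) c a b (fun p => p.1 - p.2)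
      (shiftedIntegrand g Φ Ψ) := by
  have hsnd : ‖ContinuousLinearMap.snd ℝ V V‖ ≤ 1 := ContinuousLinearMap.norm_snd_le ..
  have hy (w : V) : ContDiff ℝ n fun p : V × V => p.2 + w := contDiff_snd.add contDiff_const
  refine .of_mul_mul (fun w => hg.comp (hy w)) (fun w => hΦ.contDiff.comp (contDiff_fst.prodMk
    (hy w))) (fun w => hΨ.contDiff.comp ((hy w).prodMk contDiff_snd))
    (fun p w => (hG _).comp_affine hsnd hg) (fun p w => ?_) (fun p w => ?_)
  · have hshift (p : V × V) : ContinuousLinearMap.id ℝ (V × V) p + (0, w) = (p.1, p.2 + w) :=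
      Prod.ext (add_zero _) rfl
    have hcomp := DerivBound.comp_affine (x := p) ContinuousLinearMap.norm_id_le hΦ.contDiff
      (hshift p ▸ hΦ.joint p.1 (p.2 + w))
    simpa only [hshift, Function.uncurry, sub_sub] using hcomp
  · have hcomp := DerivBound.comp_affine hsnd (c := 0) (x := p) (hΨ.contDiff_diag w 0)
      (hΨ.diag w 0 _)
    simpa using hcomp

theorem gaussianDominated_shiftedIntegrand_diag (hg : ContDiff ℝ n g)
    (hG : ∀ x, DerivBound n G g x) (hΦ : GaussianKernelBound n C c a Φ)
    (hΨ : GaussianKernelBound n C c b Ψ) (u v : V) :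
    GaussianDominated n (4 ^ n * (G * (C * C))) c a b (fun _ => u - v)
      fun x => shiftedIntegrand g Φ Ψ (x + u, x + v) := by
  unfold shiftedIntegrand
  simp only [add_assoc]
  refine .of_mul_mul (fun w => hg.comp (contDiff_id.add contDiff_const))
    (fun w => hΦ.contDiff_diag u (v + w)) (fun w => hΨ.contDiff_diag (v + w) v)
    (fun x w => (hG _).comp_affine (A := .id ℝ V) ContinuousLinearMap.norm_id_le hg)
    (fun x w => ?_) (fun x w => ?_)
  · rw [sub_sub]
    exact hΦ.diag u (v + w) x
  · simpa using hΨ.diag (v + w) v x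

end GaussianKernelBound

section SpaceConvolution

theorem rpow_neg_half_le_of_le {n : ℕ} {a b : ℝ} (hb : 0 < b) (hba : b ≤ a) :
    a ^ (-(n : ℝ) / 2) ≤ 2 ^ ((n : ℝ) / 2) * (a + b) ^ (-(n : ℝ) / 2) := by
  have hab : 0 < a + b := by linarith
  calc a ^ (-(n : ℝ) / 2) ≤ ((a + b) / 2) ^ (-(n : ℝ) / 2) :=
        rpow_le_rpow_of_nonpos (by positivity) (by linarith)
          (div_nonpos_of_nonpos_of_nonneg (neg_nonpos.2 n.cast_nonneg) zero_le_two)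
    _ = 2 ^ ((n : ℝ) / 2) * (a + b) ^ (-(n : ℝ) / 2) := by
        rw [div_rpow hab.le zero_le_two, neg_div, rpow_neg zero_le_two, div_inv_eq_mul, mul_comm]

/-- The constant in the estimates for a space convolution on `V`. Its factors come from the two
product rules, the suprema of `g` and of the kernels, the convolution of the Gaussian profiles, and
the comparison of the longer of the two times with half of their sum. -/
def spaceConvConst (V : Type*) [NormedAddCommGroup V] [NormedSpace ℝ V] (n : ℕ) (G C c : ℝ) : ℝ :=
  4 ^ n * (G * (C * C)) * (π / c) ^ ((Module.finrank ℝ V : ℝ) / 2) * 2 ^ ((n : ℝ) / 2)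

variable {V : Type*} [NormedAddCommGroup V] [InnerProductSpace ℝ V] [FiniteDimensional ℝ V]
  [MeasurableSpace V] [BorelSpace V] {n : ℕ} {C c G a b : ℝ} {g : V → ℝ} {Φ Ψ : V → V → ℝ}

/-- The space convolution of two kernels with weight `g`. The paper's `π₁ *_{g,0} π₂` at `(s, t)` is
`spaceConv g (π₁(s, ·, ·)) (π₂(t - s, ·, ·))`. -/
def spaceConv (g : V → ℝ) (Φ Ψ : V → V → ℝ) (x y : V) : ℝ :=
  ∫ z, g z * (Φ x z * Ψ z y)

theorem spaceConv_swap (g : V → ℝ) (Φ Ψ : V → V → ℝ) (x y : V) :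
    spaceConv g (fun x y => Ψ y x) (fun x y => Φ y x) y x = spaceConv g Φ Ψ x y :=
  integral_congr_ae (.of_forall fun z => congrArg (g z * ·) (mul_comm (Ψ z y) (Φ x z)))

theorem spaceConv_eq_integral_shiftedIntegrand (g : V → ℝ) (Φ Ψ : V → V → ℝ) (x y : V) :
    spaceConv g Φ Ψ x y = ∫ w, shiftedIntegrand g Φ Ψ (x, y) w :=
  (integral_add_left_eq_self (fun z => g z * (Φ x z * Ψ z y)) y).symm

theorem uncurry_spaceConv (g : V → ℝ) (Φ Ψ : V → V → ℝ) :
    Function.uncurry (spaceConv g Φ Ψ) = fun p => ∫ w, shiftedIntegrand g Φ Ψ p w :=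
  funext fun p => spaceConv_eq_integral_shiftedIntegrand g Φ Ψ p.1 p.2

theorem derivBound_spaceConv_diag (hg : ContDiff ℝ n g) (hG : ∀ x, DerivBound n G g x) (hc : 0 < c)
    (ha : 0 < a) (hb : 0 < b) (hΦ : GaussianKernelBound n C c a Φ)
    (hΨ : GaussianKernelBound n C c b Ψ) (u v x : V) :
    DerivBound n (4 ^ n * (G * (C * C)) * ((π / c) ^ ((Module.finrank ℝ V : ℝ) / 2) *
      gaussianProfile c (a + b) (u - v))) (fun x => spaceConv g Φ Ψ (x + u) (x + v)) x := by
  have hsmooth : ContDiff ℝ n (Function.uncurry fun x => shiftedIntegrand g Φ Ψ (x + u, x + v)) :=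
    (contDiff_shiftedIntegrand hg hΦ.contDiff hΨ.contDiff).comp
      (((contDiff_fst.add contDiff_const).prodMk (contDiff_fst.add contDiff_const)).prodMk
        contDiff_snd)
  have hbound := (gaussianDominated_shiftedIntegrand_diag hg hG hΦ hΨ u v).derivBound_integral
    hsmooth hc ha hb x
  simpa only [spaceConv_eq_integral_shiftedIntegrand] using hbound

theorem derivBound_spaceConv_left (hg : ContDiff ℝ n g) (hG : ∀ x, DerivBound n G g x) (hc : 0 < c)
    (ha : 0 < a) (hb : 0 < b) (hΦ : GaussianKernelBound n C c a Φ)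
    (hΨ : GaussianKernelBound n C c b Ψ) (x y : V) :
    DerivBound n (4 ^ n * (G * (C * a ^ (-(n : ℝ) / 2) * C)) *
      ((π / c) ^ ((Module.finrank ℝ V : ℝ) / 2) * gaussianProfile c (a + b) (x - y)))
      (Function.uncurry (spaceConv g Φ Ψ)) (x, y) := by
  rw [uncurry_spaceConv]
  exact (gaussianDominated_shiftedIntegrand hg hG hΦ hΨ).derivBound_integral
    (contDiff_shiftedIntegrand hg hΦ.contDiff hΨ.contDiff) hc ha hb (x, y)

theorem derivBound_spaceConv_of_le (hg : ContDiff ℝ n g) (hG : ∀ x, DerivBound n G g x)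
    (hc : 0 < c) (hb : 0 < b) (hba : b ≤ a) (hΦ : GaussianKernelBound n C c a Φ)
    (hΨ : GaussianKernelBound n C c b Ψ) (x y : V) :
    DerivBound n (spaceConvConst V n G C c * (a + b) ^ (-(n : ℝ) / 2) *
      gaussianProfile c (a + b) (x - y)) (Function.uncurry (spaceConv g Φ Ψ)) (x, y) := by
  have ha : 0 < a := hb.trans_le hba
  have hγ := gaussianProfile_nonneg (c := c) (add_pos ha hb).le (x - y)
  have hG₀ : 0 ≤ G := (hG 0).nonneg
  let K := 4 ^ n * (G * (C * C)) * (π / c) ^ ((Module.finrank ℝ V : ℝ) / 2)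
  have hK : 0 ≤ K * gaussianProfile c (a + b) (x - y) := by
    have := mul_self_nonneg C
    positivity
  refine (derivBound_spaceConv_left hg hG hc ha hb hΦ hΨ x y).mono ?_
  calc 4 ^ n * (G * (C * a ^ (-(n : ℝ) / 2) * C)) *
        ((π / c) ^ ((Module.finrank ℝ V : ℝ) / 2) * gaussianProfile c (a + b) (x - y))
      = a ^ (-(n : ℝ) / 2) * (K * gaussianProfile c (a + b) (x - y)) := by ring
    _ ≤ 2 ^ ((n : ℝ) / 2) * (a + b) ^ (-(n : ℝ) / 2) *
        (K * gaussianProfile c (a + b) (x - y)) :=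
        mul_le_mul_of_nonneg_right (rpow_neg_half_le_of_le hb hba) hK
    _ = spaceConvConst V n G C c * (a + b) ^ (-(n : ℝ) / 2) *
        gaussianProfile c (a + b) (x - y) := by
        rw [spaceConvConst]
        ring

theorem GaussianKernelBound.spaceConv (hg : ContDiff ℝ n g) (hG : ∀ x, DerivBound n G g x)
    (hc : 0 < c) (ha : 0 < a) (hb : 0 < b) (hΦ : GaussianKernelBound n C c a Φ)
    (hΨ : GaussianKernelBound n C c b Ψ) :
    GaussianKernelBound n (spaceConvConst V n G C c) c (a + b) (spaceConv g Φ Ψ) where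
  contDiff := by
    rw [uncurry_spaceConv]
    exact (gaussianDominated_shiftedIntegrand hg hG hΦ hΨ).contDiff_integral
      (contDiff_shiftedIntegrand hg hΦ.contDiff hΨ.contDiff) hc ha hb
  joint x y := by
    obtain hba | hab := le_total b a
    · exact derivBound_spaceConv_of_le hg hG hc hb hba hΦ hΨ x y
    · have hswap := (derivBound_spaceConv_of_le hg hG hc ha hab hΨ.swap hΦ.swap y x).uncurry_swap
      rw [← neg_sub, gaussianProfile_neg, add_comm a b]
      simpa only [spaceConv_swap] using hswap
  diag u v x := (derivBound_spaceConv_diag hg hG hc ha hb hΦ hΨ u v x).mono <| by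
    have hγ := gaussianProfile_nonneg (c := c) (add_pos ha hb).le (u - v)
    have hG₀ : 0 ≤ G := (hG 0).nonneg
    have hC₀ : 0 ≤ C := hΦ.nonneg ha
    have hpow : (1 : ℝ) ≤ 2 ^ ((n : ℝ) / 2) := one_le_rpow one_le_two (by positivity)
    rw [← mul_assoc, spaceConvConst]
    exact mul_le_mul_of_nonneg_right (le_mul_of_one_le_right (by positivity) hpow) hγ

end SpaceConvolution

section MultiIndex

variable {d : ℕ}

theorem length_mToList (m : Fin d → ℕ) : (mToList m).length = mlen m := by
  simp [mToList, mlen, List.length_flatMap, ← List.ofFn_eq_map, List.sum_ofFn]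

theorem count_mToList (m : Fin d → ℕ) (i : Fin d) : (mToList m).count i = m i := by
  simp [mToList, List.count_flatMap, Function.comp_def, List.count_replicate,
    ← List.ofFn_eq_map, List.sum_ofFn]

theorem mToList_count_perm (l : List (Fin d)) : (mToList fun i => l.count i).Perm l :=
  List.perm_iff_count.2 fun i => count_mToList _ i

theorem map_inr_filterMap_append_map_inl_filterMap_perm {ι κ : Type*} (l : List (ι ⊕ κ)) :
    ((l.filterMap Sum.getRight?).map Sum.inr ++ (l.filterMap Sum.getLeft?).map Sum.inl).Perm l := by
  induction l with
  | nil => rfl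
  | cons i l ih =>
    obtain i | i := i
    · exact List.perm_middle.trans (ih.cons _)
    · exact ih.cons _

theorem exists_map_inr_mToList_append_map_inl_mToList_perm (l : List (Fin d ⊕ Fin d)) :
    ∃ α β : Fin d → ℕ,
      ((mToList β).map Sum.inr ++ (mToList α).map Sum.inl).Perm l :=
  ⟨_, _, (((mToList_count_perm _).map _).append ((mToList_count_perm _).map _)).trans
    (map_inr_filterMap_append_map_inl_filterMap_perm l)⟩

theorem finite_setOf_mlen_le (d n : ℕ) : {m : Fin d → ℕ | mlen m ≤ n}.Finite :=
  (Set.finite_Iic fun _ => n).subset fun m hm i =>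
    (Finset.single_le_sum (f := m) (fun _ _ => Nat.zero_le _) (Finset.mem_univ i)).trans hm

/-- The standard basis of `ℝ^d`, whose vectors are the directions of the partial derivatives. -/
def euBasis (d : ℕ) : Module.Basis (Fin d) ℝ (Eu d) :=
  (EuclideanSpace.basisFun (Fin d) ℝ).toBasis

theorem euBasis_apply (i : Fin d) : euBasis d i = EuclideanSpace.single i 1 := by
  simp [euBasis]

theorem abs_repr_euBasis_le (i : Fin d) (v : Eu d) : |(euBasis d).repr v i| ≤ ‖v‖ := by
  simpa [euBasis] using PiLp.norm_apply_le v i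

theorem abs_repr_euBasis_prod_le (i : Fin d ⊕ Fin d) (v : Eu d × Eu d) :
    |((euBasis d).prod (euBasis d)).repr v i| ≤ ‖v‖ := by
  obtain i | i := i
  · simpa using (abs_repr_euBasis_le i v.1).trans (norm_fst_le v)
  · simpa using (abs_repr_euBasis_le i v.2).trans (norm_snd_le v)

theorem norm_euBasis_prod_le_one (i : Fin d ⊕ Fin d) : ‖(euBasis d).prod (euBasis d) i‖ ≤ 1 := by
  obtain i | i := i <;> simp [euBasis_apply, Prod.norm_def]

theorem pderivs_eq_iteratedDirDeriv (l : List (Fin d)) (f : Eu d → ℝ) :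
    pderivs l f = iteratedDirDeriv (l.map (euBasis d)) f := by
  induction l generalizing f with
  | nil => rfl
  | cons i l ih =>
    rw [pderivs, List.map_cons, iteratedDirDeriv, ih, euBasis_apply]

section Prod

variable {E : Type*} [NormedAddCommGroup E] [NormedSpace ℝ E]
  {E' : Type*} [NormedAddCommGroup E'] [NormedSpace ℝ E']
  {F : Type*} [NormedAddCommGroup F] [NormedSpace ℝ F] {f : E × E' → F}

theorem iteratedDirDeriv_map_inl (L : List E) (hf : ContDiff ℝ L.length f) (x : E) (y : E') :
    iteratedDirDeriv (L.map (ContinuousLinearMap.inl ℝ E E')) f (x, y) =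
      iteratedDirDeriv L (fun x => f (x, y)) x := by
  simpa using (iteratedDirDeriv_comp_affine (.inl ℝ E E') (0, y) L hf x).symm

theorem iteratedDirDeriv_map_inr (L : List E') (hf : ContDiff ℝ L.length f) (x : E) (y : E') :
    iteratedDirDeriv (L.map (ContinuousLinearMap.inr ℝ E E')) f (x, y) =
      iteratedDirDeriv L (fun y => f (x, y)) y := by
  simpa using (iteratedDirDeriv_comp_affine (.inr ℝ E E') (x, 0) L hf y).symm

end Prod

theorem D2_eq_iteratedDirDeriv (α β : Fin d → ℕ) {Φ : Eu d → Eu d → ℝ}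
    (hΦ : ContDiff ℝ (mlen α + mlen β : ℕ) (Function.uncurry Φ)) (x y : Eu d) :
    D2 α β Φ x y = iteratedDirDeriv (((mToList β).map Sum.inr ++ (mToList α).map Sum.inl).map
      ((euBasis d).prod (euBasis d))) (Function.uncurry Φ) (x, y) := by
  have hinl : (euBasis d).prod (euBasis d) ∘ Sum.inl =
      ContinuousLinearMap.inl ℝ (Eu d) (Eu d) ∘ euBasis d := by
    ext i <;> simp
  have hinr : (euBasis d).prod (euBasis d) ∘ Sum.inr =
      ContinuousLinearMap.inr ℝ (Eu d) (Eu d) ∘ euBasis d := by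
    ext i <;> simp
  have hα : ((mToList α).map (euBasis d)).length = mlen α := by
    rw [List.length_map, length_mToList]
  have hβ : ((mToList β).map (euBasis d)).length = mlen β := by
    rw [List.length_map, length_mToList]
  rw [List.map_append, List.map_map, List.map_map, hinl, hinr, ← List.map_map, ← List.map_map,
    iteratedDirDeriv_append, iteratedDirDeriv_map_inl]
  · simp only [D2, pderivM, pderivs_eq_iteratedDirDeriv]
    congr 1
    ext x'
    rw [iteratedDirDeriv_map_inr]
    · rfl
    · exact hΦ.of_le (by rw [hβ]; exact_mod_cast Nat.le_add_left _ _)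
  · refine contDiff_iteratedDirDeriv _ ?_
    rwa [List.length_map (f := ⇑(ContinuousLinearMap.inr ℝ (Eu d) (Eu d))), hα, hβ]

namespace DerivBound

variable {n : ℕ} {C : ℝ}

theorem abs_pderivM_le {m : Fin d → ℕ} {f : Eu d → ℝ} {x : Eu d} (h : DerivBound n C f x)
    (hf : ContDiff ℝ n f) (hm : mlen m ≤ n) : |pderivM m f x| ≤ C := by
  have hlen : ((mToList m).map (euBasis d)).length ≤ n := by
    rwa [List.length_map, length_mToList]
  rw [pderivM, pderivs_eq_iteratedDirDeriv]
  exact h.norm_iteratedDirDeriv_le hlen (by simp [euBasis_apply]) hf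

theorem abs_D2_le {α β : Fin d → ℕ} {Φ : Eu d → Eu d → ℝ} {x y : Eu d}
    (h : DerivBound (mlen α + mlen β) C (Function.uncurry Φ) (x, y))
    (hΦ : ContDiff ℝ (mlen α + mlen β : ℕ) (Function.uncurry Φ)) : |D2 α β Φ x y| ≤ C := by
  rw [D2_eq_iteratedDirDeriv α β hΦ]
  refine h.norm_iteratedDirDeriv_le ?_ ?_ hΦ
  · simp [length_mToList, add_comm]
  · exact List.forall_mem_map.2 fun i _ => norm_euBasis_prod_le_one i

theorem of_pderivM {f : Eu d → ℝ} {x : Eu d} (hf : ContDiff ℝ n f)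
    (hC : ∀ m : Fin d → ℕ, mlen m ≤ n → |pderivM m f x| ≤ C) :
    DerivBound n ((1 + d) ^ n * C) f x := by
  have hlist (l : List (Fin d)) (hl : l.length ≤ n) :
      ‖iteratedDirDeriv (l.map (euBasis d)) f x‖ ≤ C := by
    have hperm := mToList_count_perm l
    have hlen : mlen (fun i => l.count i) = l.length := by
      rw [← length_mToList, hperm.length_eq]
    rw [← iteratedDirDeriv_perm (hperm.map _) (hf.of_le (by simpa [hlen, length_mToList] using hl)),
      ← pderivs_eq_iteratedDirDeriv]
    exact hC _ (hlen.trans_le hl)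
  simpa using of_basis (euBasis d) abs_repr_euBasis_le hf hlist

theorem of_D2 {Φ : Eu d → Eu d → ℝ} {x y : Eu d} (hΦ : ContDiff ℝ n (Function.uncurry Φ))
    (hC : ∀ α β : Fin d → ℕ, mlen α + mlen β ≤ n → |D2 α β Φ x y| ≤ C) :
    DerivBound n ((1 + 2 * d) ^ n * C) (Function.uncurry Φ) (x, y) := by
  have hlist (l : List (Fin d ⊕ Fin d)) (hl : l.length ≤ n) :
      ‖iteratedDirDeriv (l.map ((euBasis d).prod (euBasis d))) (Function.uncurry Φ) (x, y)‖ ≤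
        C := by
    obtain ⟨α, β, hperm⟩ := exists_map_inr_mToList_append_map_inl_mToList_perm l
    have hlen : mlen α + mlen β ≤ n := by
      rw [← length_mToList, ← length_mToList, add_comm]
      simpa using hperm.length_eq.trans_le hl
    rw [← iteratedDirDeriv_perm (hperm.map _) (hΦ.of_le (by
        rw [List.length_map, hperm.length_eq]; exact_mod_cast hl)),
      ← D2_eq_iteratedDirDeriv _ _ (hΦ.of_le (by exact_mod_cast hlen))]
    exact hC _ _ hlen
  simpa [two_mul] using of_basis _ abs_repr_euBasis_prod_le hΦ hlist

end DerivBound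

theorem exists_derivBound_of_bounded_pderivM {g : Eu d → ℝ} {n : ℕ} (hg : ContDiff ℝ n g)
    (hgb : ∀ m : Fin d → ℕ, ∃ C : ℝ, ∀ x, |pderivM m g x| ≤ C) :
    ∃ G, ∀ x, DerivBound n G g x := by
  choose C hC using hgb
  have := (finite_setOf_mlen_le d n).to_subtype
  obtain ⟨M, hM⟩ := Finite.exists_le fun m : {m : Fin d → ℕ | mlen m ≤ n} => C m
  exact ⟨(1 + d) ^ n * M, fun x => .of_pderivM hg fun m hm => (hC m x).trans (hM ⟨m, hm⟩)⟩

end MultiIndex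

section BoundedFamilies

variable {d : ℕ}

/-- The estimates required by the boundedness notions of `𝒢(ℝ^d)` and `𝓗(ℝ^d)` for one pair of
multi-indices, one time `t` and the kernel `Φ = π(t, ·, ·)` or `Φ = ρ(s, t, ·, ·)`. -/
def PartialDerivBound (α β : Fin d → ℕ) (c₁ c₂ t : ℝ) (Φ : Eu d → Eu d → ℝ) : Prop :=
  ∀ x y : Eu d,
    |D2 α β Φ x y| ≤ c₁ * t ^ (-((mlen α + mlen β + d : ℕ) : ℝ) / 2) *
      Real.exp (-c₂ * ‖x - y‖ ^ 2 / t) ∧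
    |pderivM α (fun x' => Φ x' (x' + Real.sqrt t • y)) x| ≤
      c₁ * t ^ (-(d : ℝ) / 2) * Real.exp (-c₂ * ‖y‖ ^ 2)

/-- The family `B` of kernels is a bounded subset of `𝒢(ℝ^d)`, except that its members need not be
measurable in `(t, x, y)`. -/
structure IsBoundedInG (B : Set (ℝ → Eu d → Eu d → ℝ)) : Prop where
  contDiff : ∀ P ∈ B, ∀ t ∈ Set.Ioc (0 : ℝ) 1, ContDiff ℝ ∞ (Function.uncurry (P t))
  bound : ∀ α β : Fin d → ℕ, ∃ c₁ ≥ 0, ∃ c₂ > 0, ∀ P ∈ B, ∀ t ∈ Set.Ioc (0 : ℝ) 1,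
    PartialDerivBound α β c₁ c₂ t (P t)

/-- The family `R` of two-time kernels is a bounded subset of `𝓗(ℝ^d)`, except that its members need
not be measurable in `(s, t, x, y)`. -/
structure IsBoundedInH (R : Set (ℝ → ℝ → Eu d → Eu d → ℝ)) : Prop where
  contDiff : ∀ ρ ∈ R, ∀ s t : ℝ, 0 < s → s < t → t ≤ 1 → ContDiff ℝ ∞ (Function.uncurry (ρ s t))
  bound : ∀ α β : Fin d → ℕ, ∃ c₁ ≥ 0, ∃ c₂ > 0, ∀ ρ ∈ R, ∀ s t : ℝ, 0 < s → s < t → t ≤ 1 →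
    PartialDerivBound α β c₁ c₂ t (ρ s t)

variable {n : ℕ} {C c c₁ c₂ c₁' c₂' t : ℝ} {Φ : Eu d → Eu d → ℝ} {α β : Fin d → ℕ}

theorem PartialDerivBound.mono (h : PartialDerivBound α β c₁ c₂ t Φ) (ht : 0 < t) (hc₁ : c₁ ≤ c₁')
    (hc₁' : 0 ≤ c₁') (hc₂ : c₂' ≤ c₂) : PartialDerivBound α β c₁' c₂' t Φ := fun x y =>
  ⟨(h x y).1.trans (by gcongr), (h x y).2.trans (by gcongr)⟩

theorem exists_uniform_constants {κ : Type*} [Finite κ] {p : κ → ℝ → ℝ → Prop}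
    (hmono : ∀ i c₁ c₂ c₁' c₂', 0 ≤ c₁ → c₁ ≤ c₁' → c₂' ≤ c₂ → p i c₁ c₂ → p i c₁' c₂')
    (h : ∀ i, ∃ c₁ ≥ 0, ∃ c₂ > 0, p i c₁ c₂) : ∃ c₁ ≥ 0, ∃ c₂ > 0, ∀ i, p i c₁ c₂ := by
  choose c₁ hc₁ c₂ hc₂ hp using h
  obtain ⟨M, hM⟩ := Finite.exists_le c₁
  obtain ⟨N, hN⟩ := Finite.exists_le fun i => (c₂ i)⁻¹
  refine ⟨max M 0, le_max_right _ _, (max N 1)⁻¹, by positivity, fun i => ?_⟩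
  exact hmono i _ _ _ _ (hc₁ i) ((hM i).trans (le_max_left _ _))
    (inv_le_of_inv_le₀ (hc₂ i) ((hN i).trans (le_max_left _ _))) (hp i)

theorem GaussianKernelBound.of_partialDerivBound (ht : t ∈ Set.Ioc (0 : ℝ) 1)
    (hΦ : ContDiff ℝ n (Function.uncurry Φ)) (hc₁ : 0 ≤ c₁)
    (h : ∀ α β : Fin d → ℕ, mlen α ≤ n → mlen β ≤ n → PartialDerivBound α β c₁ c₂ t Φ) :
    GaussianKernelBound n ((1 + 2 * d) ^ n * c₁) c₂ t Φ where
  contDiff := hΦ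
  joint x y := by
    have hpow {k : ℕ} (hk : k ≤ n) : t ^ (-((k + d : ℕ) : ℝ) / 2) ≤
        t ^ (-(n : ℝ) / 2) * t ^ (-(d : ℝ) / 2) := by
      rw [← rpow_add ht.1]
      refine rpow_le_rpow_of_exponent_ge ht.1 ht.2 ?_
      have : (k : ℝ) ≤ n := by exact_mod_cast hk
      push_cast
      linarith
    have hD2 (α β : Fin d → ℕ) (hn : mlen α + mlen β ≤ n) : |D2 α β Φ x y| ≤
        c₁ * (t ^ (-(n : ℝ) / 2) * gaussianProfile c₂ t (x - y)) :=
      calc |D2 α β Φ x y| ≤ c₁ * t ^ (-((mlen α + mlen β + d : ℕ) : ℝ) / 2) *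
            exp (-c₂ * ‖x - y‖ ^ 2 / t) := (h α β (by lia) (by lia) x y).1
        _ ≤ c₁ * (t ^ (-(n : ℝ) / 2) * t ^ (-(d : ℝ) / 2)) * exp (-c₂ * ‖x - y‖ ^ 2 / t) := by
            gcongr
            exact hpow hn
        _ = c₁ * (t ^ (-(n : ℝ) / 2) * gaussianProfile c₂ t (x - y)) := by
            rw [gaussianProfile, finrank_euclideanSpace_fin]
            ring
    simpa only [mul_assoc] using DerivBound.of_D2 hΦ hD2
  diag u v x := by
    obtain ⟨y, hy⟩ : ∃ y, √t • y = v - u :=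
      ⟨(√t)⁻¹ • (v - u), smul_inv_smul₀ (sqrt_pos.2 ht.1).ne' _⟩
    have hf : ContDiff ℝ n fun x => Φ x (x + √t • y) :=
      hΦ.comp (contDiff_id.prodMk (contDiff_id.add contDiff_const))
    have hpderivM (m : Fin d → ℕ) (hm : mlen m ≤ n) :
        |pderivM m (fun x => Φ x (x + √t • y)) (x + u)| ≤ c₁ * gaussianProfile c₂ t (u - v) := by
      rw [← neg_sub, ← hy, gaussianProfile_neg, gaussianProfile_sqrt_smul ht.1,
        finrank_euclideanSpace_fin, ← mul_assoc]
      exact (h m m hm hm (x + u) y).2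
    have hdiag := (DerivBound.of_pderivM hf hpderivM).comp_affine (A := .id ℝ (Eu d))
      ContinuousLinearMap.norm_id_le (c := u) (x := x) hf
    have hshift (x : Eu d) : x + u + √t • y = x + v := by
      rw [hy]
      abel
    have hγ := gaussianProfile_nonneg (c := c₂) ht.1.le (u - v)
    simp only [ContinuousLinearMap.id_apply, hshift] at hdiag
    refine hdiag.mono ?_
    rw [mul_assoc]
    gcongr
    linarith [d.cast_nonneg (α := ℝ)]

theorem GaussianKernelBound.partialDerivBound (ht : 0 < t)
    (h : GaussianKernelBound (mlen α + mlen β) C c t Φ) : PartialDerivBound α β C c t Φ := by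
  refine fun x y => ⟨?_, ?_⟩
  · refine ((h.joint x y).abs_D2_le h.contDiff).trans_eq ?_
    rw [gaussianProfile, finrank_euclideanSpace_fin, mul_assoc, ← mul_assoc (t ^ _),
      ← rpow_add ht, ← mul_assoc]
    congr 3
    push_cast
    ring
  · have hdiag := h.diag 0 (√t • y) x
    have hsmooth := h.contDiff_diag 0 (√t • y)
    simp only [add_zero, zero_sub, gaussianProfile_neg, gaussianProfile_sqrt_smul ht,
      finrank_euclideanSpace_fin, ← mul_assoc] at hdiag hsmooth
    exact hdiag.abs_pderivM_le hsmooth (Nat.le_add_right _ _)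

theorem IsBoundedInG.exists_gaussianKernelBound {B : Set (ℝ → Eu d → Eu d → ℝ)}
    (h : IsBoundedInG B) (n : ℕ) :
    ∃ C, ∃ c > 0, ∀ P ∈ B, ∀ t ∈ Set.Ioc (0 : ℝ) 1, GaussianKernelBound n C c t (P t) := by
  have := (finite_setOf_mlen_le d n).to_subtype
  obtain ⟨c₁, hc₁, c₂, hc₂, hbound⟩ := exists_uniform_constants
    (κ := {m : Fin d → ℕ | mlen m ≤ n} × {m : Fin d → ℕ | mlen m ≤ n})
    (p := fun m c₁ c₂ => ∀ P ∈ B, ∀ t ∈ Set.Ioc (0 : ℝ) 1,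
      PartialDerivBound m.1.1 m.2.1 c₁ c₂ t (P t))
    (fun m c₁ c₂ c₁' c₂' h₀ h₁ h₂ hp P hP t ht => (hp P hP t ht).mono ht.1 h₁ (h₀.trans h₁) h₂)
    fun m => h.bound m.1.1 m.2.1
  exact ⟨_, c₂, hc₂, fun P hP t ht => .of_partialDerivBound ht
    ((h.contDiff P hP t ht).of_le (by exact_mod_cast le_top)) hc₁
    fun α β hα hβ => hbound (⟨α, hα⟩, ⟨β, hβ⟩) P hP t ht⟩

theorem exists_gaussianKernelBound_convG0 {g : Eu d → ℝ} (hg : ContDiff ℝ ∞ g)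
    (hgb : ∀ γ : Fin d → ℕ, ∃ C : ℝ, ∀ x, |pderivM γ g x| ≤ C)
    {B₁ B₂ : Set (ℝ → Eu d → Eu d → ℝ)} (h₁ : IsBoundedInG B₁) (h₂ : IsBoundedInG B₂) (n : ℕ) :
    ∃ C, ∃ c > 0, ∀ P₁ ∈ B₁, ∀ P₂ ∈ B₂, ∀ s t : ℝ, 0 < s → s < t → t ≤ 1 →
      GaussianKernelBound n C c t (convG0 g P₁ P₂ s t) := by
  have hgn : ContDiff ℝ n g := hg.of_le (by exact_mod_cast le_top)
  obtain ⟨G, hG⟩ := exists_derivBound_of_bounded_pderivM hgn hgb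
  obtain ⟨C₁, c₁, hc₁, hP₁⟩ := h₁.exists_gaussianKernelBound n
  obtain ⟨C₂, c₂, hc₂, hP₂⟩ := h₂.exists_gaussianKernelBound n
  refine ⟨spaceConvConst (Eu d) n G (max C₁ C₂) (min c₁ c₂), min c₁ c₂, lt_min hc₁ hc₂,
    fun P₁ hP₁' P₂ hP₂' s t hs hst ht => ?_⟩
  have hts : 0 < t - s := sub_pos.2 hst
  have hΦ := (hP₁ P₁ hP₁' s ⟨hs, hst.le.trans ht⟩).mono hs (le_max_left C₁ C₂) (min_le_left c₁ c₂)
  have hΨ := (hP₂ P₂ hP₂' (t - s) ⟨hts, by linarith⟩).mono hts (le_max_right C₁ C₂)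
    (min_le_right c₁ c₂)
  have hconv := hΦ.spaceConv hgn hG (lt_min hc₁ hc₂) hs hts hΨ
  rw [add_sub_cancel] at hconv
  exact hconv

end BoundedFamilies

theorem statement1_general {d : ℕ} {g : Eu d → ℝ} (hg : ContDiff ℝ ∞ g)
    (hgb : ∀ γ : Fin d → ℕ, ∃ C : ℝ, ∀ x, |pderivM γ g x| ≤ C)
    {B₁ B₂ : Set (ℝ → Eu d → Eu d → ℝ)} (h₁ : IsBoundedInG B₁) (h₂ : IsBoundedInG B₂) :
    IsBoundedInH (Set.image2 (convG0 g) B₁ B₂) where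
  contDiff := by
    rintro _ ⟨P₁, hP₁, P₂, hP₂, rfl⟩ s t hs hst ht
    refine contDiff_infty.2 fun n => ?_
    obtain ⟨C, c, -, h⟩ := exists_gaussianKernelBound_convG0 hg hgb h₁ h₂ n
    exact (h P₁ hP₁ P₂ hP₂ s t hs hst ht).contDiff
  bound α β := by
    obtain ⟨C, c, hc, h⟩ := exists_gaussianKernelBound_convG0 hg hgb h₁ h₂ (mlen α + mlen β)
    refine ⟨max C 0, le_max_right _ _, c, hc, ?_⟩
    rintro _ ⟨P₁, hP₁, P₂, hP₂, rfl⟩ s t hs hst ht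
    exact (h P₁ hP₁ P₂ hP₂ s t hs hst ht).partialDerivBound (hs.trans hst) |>.mono (hs.trans hst)
      (le_max_left _ _) (le_max_right _ _) le_rfl

/-- Proposition 5 (ii): if `B₁, B₂` are bounded subsets of `𝒢(ℝ^d)` and `g ∈ C_b^∞(ℝ^d)`,
then `{π₁ *_{g,0} π₂ | π₁ ∈ B₁, π₂ ∈ B₂}` is a bounded subset of `𝓗(ℝ^d)`. -/
theorem statement1 (d : ℕ) (hd : 1 ≤ d)
    (g : Eu d → ℝ) (hg : ContDiff ℝ (⊤ : ℕ∞) g)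
    (hgb : ∀ γ : Fin d → ℕ, ∃ C : ℝ, ∀ x, |pderivM γ g x| ≤ C)
    (B₁ B₂ : Set (ℝ → Eu d → Eu d → ℝ))
    -- the members of `B₁ ∪ B₂` are measurable in `(t,x,y)`
    (hmeas : ∀ P ∈ B₁ ∪ B₂, Measurable fun p : ℝ × Eu d × Eu d => P p.1 p.2.1 p.2.2)
    -- and infinitely differentiable in `(x,y)` for every `t ∈ (0,1]`
    (hsmooth : ∀ P ∈ B₁ ∪ B₂, ∀ t ∈ Set.Ioc (0:ℝ) 1,
      ContDiff ℝ (⊤ : ℕ∞) fun p : Eu d × Eu d => P t p.1 p.2)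
    -- `B₁` and `B₂` are bounded subsets of `𝒢(ℝ^d)`
    (hG : ∀ α β : Fin d → ℕ, ∃ c₁ ≥ (0:ℝ), ∃ c₂ > (0:ℝ), ∀ P ∈ B₁ ∪ B₂,
      ∀ t ∈ Set.Ioc (0:ℝ) 1, ∀ x y : Eu d,
        |D2 α β (P t) x y| ≤ c₁ * t ^ (-((mlen α + mlen β + d : ℕ) : ℝ) / 2) *
            Real.exp (-c₂ * ‖x - y‖ ^ 2 / t) ∧
        |pderivM α (fun x' => P t x' (x' + Real.sqrt t • y)) x| ≤
          c₁ * t ^ (-(d : ℝ) / 2) * Real.exp (-c₂ * ‖y‖ ^ 2)) :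
    -- conclusion: the convolutions form a bounded subset of `𝓗(ℝ^d)`
    (∀ P₁ ∈ B₁, ∀ P₂ ∈ B₂, ∀ s t : ℝ, 0 < s → s < t → t ≤ 1 →
      ContDiff ℝ (⊤ : ℕ∞) fun p : Eu d × Eu d => convG0 g P₁ P₂ s t p.1 p.2) ∧
    (∀ α β : Fin d → ℕ, ∃ c₁ ≥ (0:ℝ), ∃ c₂ > (0:ℝ), ∀ P₁ ∈ B₁, ∀ P₂ ∈ B₂,
      ∀ s t : ℝ, 0 < s → s < t → t ≤ 1 → ∀ x y : Eu d,
        |D2 α β (convG0 g P₁ P₂ s t) x y| ≤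
          c₁ * t ^ (-((mlen α + mlen β + d : ℕ) : ℝ) / 2) *
            Real.exp (-c₂ * ‖x - y‖ ^ 2 / t) ∧
        |pderivM α (fun x' => convG0 g P₁ P₂ s t x' (x' + Real.sqrt t • y)) x| ≤
          c₁ * t ^ (-(d : ℝ) / 2) * Real.exp (-c₂ * ‖y‖ ^ 2)) := by
  have hB {B : Set (ℝ → Eu d → Eu d → ℝ)} (hsub : B ⊆ B₁ ∪ B₂) : IsBoundedInG B :=
    ⟨fun P hP => hsmooth P (hsub hP), fun α β =>
      let ⟨c₁, hc₁, c₂, hc₂, h⟩ := hG α β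
      ⟨c₁, hc₁, c₂, hc₂, fun P hP => h P (hsub hP)⟩⟩
  have hconv := statement1_general hg hgb (hB Set.subset_union_left) (hB Set.subset_union_right)
  refine ⟨Set.forall_mem_image2.1 hconv.contDiff, fun α β => ?_⟩
  obtain ⟨c₁, hc₁, c₂, hc₂, h⟩ := hconv.bound α β
  exact ⟨c₁, hc₁, c₂, hc₂, Set.forall_mem_image2.1 h⟩
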